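/- arXiv:2004.06989 — 2 statements merged into one kernel-verified Lean document; each statement's English description precedes it below -/
import Mathlib

section
/- Let f, φ: [-π,π]^d → ℂ with f(x) = ∑_{‖k‖_∞ ≤ K} c_k e^{i k·x} a multivariate trigonometric polynomial, and φ a periodic function with Fourier coefficients ζ_k satisfying |ζ_k| ≤ a/‖k‖₁^{d+1} for k ≠ 0. If f and φ agree on the uniform grid of n = (2K+1)^d points x_s = 2πs/(2K+1), s ∈ {0,…,2K}^d, then ‖f - φ‖²_{L²([-π,π]^d)} = O(1/n^{(d+2)/d}), with the constant depending on a and d. -/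
open Real MeasureTheory

/-!
Put `g = f - φ`, `N = 2K + 1`, and let `η` be the Fourier coefficients of `g`; outside the band
`‖k‖_∞ ≤ K` they are those of `-φ`, so `|η k| ≤ a ‖k‖₁⁻ʳ` there. Every frequency is uniquely
`m + N q` with `m` in the band and `q ∈ ℤ^d`, and on the grid the characters of `m + N q` and `m`
coincide. Discrete Fourier inversion therefore turns `g = 0` on the grid into `∑_q η (m + N q) = 0`
for each `m`: the uncontrolled in-band coefficient `η m` is minus the sum of the out-of-band ones in
its residue class. As `‖m + N q‖₁ ≥ N ‖q‖₁ / 2`, that class contributes at most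
`2 (a (2 / N)^r ∑_{q ≠ 0} ‖q‖₁⁻ʳ)²` to `∑_k |η k|²`, where the lattice sum converges because
`r > d`. Parseval's identity and a sum over the `N^d` residue classes give the rate
`N^(d - 2r) = n^(-(2r - d) / d)`.
-/

namespace UniformSampling

open UnitAddTorus

variable {ι : Type*}

-- Mathlib's Fourier theory on `UnitAddTorus` uses these instances, but they are local to its file.
noncomputable local instance : MeasureSpace UnitAddCircle := ⟨AddCircle.haarAddCircle⟩

local instance : IsProbabilityMeasure (volume : Measure UnitAddCircle) :=
  inferInstanceAs (IsProbabilityMeasure AddCircle.haarAddCircle)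

section Grid

variable {N : ℕ} [NeZero N]

/-- The covering map `ℝ^ι → (ℝ / ℤ)^ι` in angle coordinates: `2π` corresponds to a full period, so
that the monomials `mFourier k` pull back to `x ↦ exp (i k·x)`. -/
noncomputable def toTorus (x : ι → ℝ) : UnitAddTorus ι :=
  fun i => ((((2 * π)⁻¹ • x) i : ℝ) : UnitAddCircle)

/-- The points of the uniform grid `(N⁻¹ ℤ / ℤ)^ι` on the torus, indexed by residues modulo `N`. -/
noncomputable def gridPoint (s : ι → ZMod N) : UnitAddTorus ι := fun i => ZMod.toAddCircle (s i)

theorem toTorus_eq_gridPoint (s : ι → ZMod N) :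
    toTorus (fun i => 2 * π * (s i).val / N) = gridPoint s := by
  ext i
  rw [toTorus, gridPoint, ZMod.toAddCircle_apply, Pi.smul_apply, smul_eq_mul, mul_div_assoc,
    inv_mul_cancel_left₀ two_pi_pos.ne']

variable (ι N) in
/-- Coordinatewise division with remainder by `N`, the remainder being the representative of least
absolute value; for odd `N = 2K + 1` the remainders are exactly the frequencies `‖m‖_∞ ≤ K`. -/
def residueQuotientEquiv : (ι → ZMod N) × (ι → ℤ) ≃ (ι → ℤ) where
  toFun p := (fun i => (p.1 i).valMinAbs) + (N : ℤ) • p.2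
  invFun k := (fun i => k i, fun i => (k i - (k i : ZMod N).valMinAbs) / N)
  left_inv p := by
    ext i <;> simp [NeZero.ne N]
  right_inv k := by
    ext i
    have hdvd : (N : ℤ) ∣ k i - (k i : ZMod N).valMinAbs := by
      simp [← ZMod.intCast_zmod_eq_zero_iff_dvd]
    simp [Int.mul_ediv_cancel' hdvd]

theorem mul_abs_le_abs_valMinAbs_add_mul (m : ZMod N) (q : ℤ) :
    N * |q| ≤ 2 * |m.valMinAbs + N * q| := by
  obtain ⟨hlower, hupper⟩ := m.valMinAbs_mem_Ioc
  have hm : 2 * |m.valMinAbs| ≤ N := by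
    rw [← abs_two, ← abs_mul, abs_le]
    constructor <;> linarith
  rcases eq_or_ne q 0 with rfl | hq
  · simp
  · have hq₁ : (N : ℤ) ≤ N * |q| := le_mul_of_one_le_right (by positivity) (Int.one_le_abs hq)
    have habs : N * |q| ≤ |m.valMinAbs + N * q| + |m.valMinAbs| := by
      simpa [abs_mul] using abs_sub (m.valMinAbs + N * q) m.valMinAbs
    linarith

theorem exists_le_abs_residueQuotientEquiv (m : ι → ZMod N) {q : ι → ℤ} (hq : q ≠ 0) :
    ∃ i, (N : ℤ) ≤ 2 * |residueQuotientEquiv ι N (m, q) i| := by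
  obtain ⟨i, hi⟩ := Function.ne_iff.1 hq
  exact ⟨i, (le_mul_of_one_le_right (by positivity) (Int.one_le_abs hi)).trans
    (mul_abs_le_abs_valMinAbs_add_mul (m i) (q i))⟩

end Grid

variable [Fintype ι]

section LatticeSum

theorem norm_toLp_one_eq_sum_abs (k : ι → ℤ) :
    ‖WithLp.toLp 1 k‖ = ((∑ i, |k i| : ℤ) : ℝ) := by
  simp [PiLp.norm_eq_of_L1, Int.norm_eq_abs]

theorem summable_norm_toLp_one_pow_inv {r : ℕ} (hr : Fintype.card ι < r) :
    Summable fun k : ι → ℤ => (‖WithLp.toLp 1 k‖ ^ r)⁻¹ := by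
  let b := PiLp.basisFun 1 ℝ ι
  let L := Submodule.span ℤ (Set.range b)
  let toLattice (k : ι → ℤ) : L :=
    ⟨WithLp.toLp 1 fun i => (k i : ℝ), (b.mem_span_iff_repr_mem ℤ _).2 fun i => ⟨k i, by simp [b]⟩⟩
  have toLattice_injective : Function.Injective toLattice := fun k l hkl => by
    ext i
    simpa [toLattice] using congrArg (fun z : L => (z : PiLp 1 fun _ : ι => ℝ) i) hkl
  have rank_lt : Module.finrank ℤ L < r := by
    rwa [ZLattice.rank ℝ L, Module.finrank_eq_card_basis b]
  have norm_toLattice (k : ι → ℤ) : ‖toLattice k‖ = ‖WithLp.toLp 1 k‖ := by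
    simp [toLattice, PiLp.norm_eq_of_L1, Int.norm_eq_abs]
  simpa only [Function.comp_def, norm_toLattice, inv_pow] using
    (ZLattice.summable_norm_pow_inv L r rank_lt).comp_injective toLattice_injective

/-- The Epstein-type zeta value `∑_{k ≠ 0} ‖k‖₁⁻ʳ` over the integer lattice; for `r ≠ 0` the origin
contributes nothing because `0⁻¹ = 0`. -/
noncomputable def latticeZeta (ι : Type*) [Fintype ι] (r : ℕ) : ℝ :=
  ∑' k : ι → ℤ, (‖WithLp.toLp 1 k‖ ^ r)⁻¹

end LatticeSum

section ZeroSum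

theorem norm_le_tsum_of_hasSum_zero {α E : Type*} [NormedAddCommGroup E] {u : α → E}
    {v : α → ℝ} {i₀ : α} (hu : HasSum u 0) (hv : Summable v) (hv₀ : 0 ≤ v i₀)
    (huv : ∀ i ≠ i₀, ‖u i‖ ≤ v i) : ‖u i₀‖ ≤ ∑' i, v i := by
  classical
  have hu' : HasSum (fun i => if i = i₀ then 0 else u i) (-u i₀) := by
    simpa using hasSum_ite_sub_hasSum hu i₀
  rw [← norm_neg]
  refine hu'.norm_le_of_bounded hv.hasSum fun i => ?_
  split_ifs with hi
  · simpa [hi] using hv₀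
  · exact huv i hi

theorem tsum_norm_sq_le_of_hasSum_zero {α E : Type*} [NormedAddCommGroup E] {u : α → E}
    {v : α → ℝ} {i₀ : α} (hu : HasSum u 0) (hv : Summable v) (hv₀ : ∀ i, 0 ≤ v i)
    (huv : ∀ i ≠ i₀, ‖u i‖ ≤ v i) : ∑' i, ‖u i‖ ^ 2 ≤ 2 * (∑' i, v i) ^ 2 := by
  classical
  set S := ∑' i, v i
  have hS₀ : 0 ≤ S := tsum_nonneg hv₀
  let w := Function.update v i₀ S
  have hw : HasSum w (S - v i₀ + S) := by
    simpa only [sub_add_eq_add_sub, add_comm] using hv.hasSum.update i₀ S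
  have norm_u_le (i : α) : ‖u i‖ ≤ w i := by
    rcases eq_or_ne i i₀ with rfl | hi
    · simpa [w] using norm_le_tsum_of_hasSum_zero hu hv (hv₀ i) huv
    · simpa [w, hi] using huv i hi
  have w_le (i : α) : w i ≤ S := by
    rcases eq_or_ne i i₀ with rfl | hi
    · simp [w]
    · simpa [w, hi] using hv.le_tsum i fun j _ => hv₀ j
  have norm_sq_le (i : α) : ‖u i‖ ^ 2 ≤ S * w i := by
    rw [sq]
    exact mul_le_mul ((norm_u_le i).trans (w_le i)) (norm_u_le i) (norm_nonneg _) hS₀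
  calc ∑' i, ‖u i‖ ^ 2
      ≤ ∑' i, S * w i :=
        Summable.tsum_le_tsum norm_sq_le
          (.of_nonneg_of_le (fun _ => sq_nonneg _) norm_sq_le (hw.summable.mul_left S))
          (hw.summable.mul_left S)
    _ = S * (S - v i₀ + S) := (hw.mul_left S).tsum_eq
    _ ≤ 2 * S ^ 2 := by nlinarith [mul_nonneg hS₀ (hv₀ i₀)]

end ZeroSum

section Fourier

theorem mFourierCoeff_eq_of_hasSum {η : (ι → ℤ) → ℂ} {F : C(UnitAddTorus ι, ℂ)}
    (hF : HasSum (fun k => η k • mFourier k) F) : mFourierCoeff F = η := by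
  classical
  have hLp : HasSum (fun k => η k • mFourierLp 2 k) (F.toLp 2 volume ℂ) := by
    simpa using (ContinuousMap.toLp (E := ℂ) 2 volume ℂ).hasSum hF
  ext k
  have hinner : HasSum (fun l => if k = l then η l else 0)
      (inner ℂ (mFourierLp 2 k) (F.toLp 2 volume ℂ)) := by
    simpa [inner_smul_right, orthonormal_iff_ite.1 orthonormal_mFourier] using
      (innerSL ℂ (mFourierLp 2 k)).hasSum hLp
  rw [← mFourierCoeff_toLp, ← mFourierBasis_repr, HilbertBasis.repr_apply_apply, coe_mFourierBasis]
  simpa using hinner.unique (hasSum_single k fun l hl => if_neg hl.symm)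

theorem hasSum_sq_mFourierCoeff_of_continuous (F : C(UnitAddTorus ι, ℂ)) :
    HasSum (fun k => ‖mFourierCoeff F k‖ ^ 2) (∫ x : UnitAddTorus ι, ‖F x‖ ^ 2) := by
  have parseval := hasSum_sq_mFourierCoeff (F.toLp 2 volume ℂ)
  simp_rw [mFourierCoeff_toLp] at parseval
  convert parseval using 1
  refine integral_congr_ae ?_
  filter_upwards [ContinuousMap.coeFn_toLp (𝕜 := ℂ) (p := 2) volume F] with x hx
  rw [hx]

theorem mFourier_toTorus (k : ι → ℤ) (x : ι → ℝ) :
    mFourier k (toTorus x) = Complex.exp (Complex.I * ∑ i, (k i : ℂ) * (x i : ℂ)) := by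
  rw [Finset.mul_sum, Complex.exp_sum]
  refine Finset.prod_congr rfl fun i _ => ?_
  rw [toTorus, fourier_coe_apply, Pi.smul_apply, smul_eq_mul]
  congr 1
  push_cast
  field_simp

open scoped Pointwise in
theorem setIntegral_comp_toTorus {E : Type*} [NormedAddCommGroup E] [NormedSpace ℝ E]
    (g : UnitAddTorus ι → E) :
    ∫ x in Set.univ.pi fun _ : ι => Set.Icc (-π) π, g (toTorus x) =
      (2 * π) ^ Fintype.card ι • ∫ y : UnitAddTorus ι, g y := by
  have htwopi : (0 : ℝ) < 2 * π := two_pi_pos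
  have smul_cube : (2 * π)⁻¹ • Set.univ.pi (fun _ : ι => Set.Icc (-π) π) =
      Set.univ.pi fun _ => Set.Icc (-(1 / 2)) (-(1 / 2) + 1 : ℝ) := by
    rw [Set.smul_set_univ_pi]
    refine congrArg _ (funext fun i => ?_)
    rw [Pi.smul_apply, LinearOrderedField.smul_Icc (inv_pos.2 htwopi)]
    congr 1 <;> field_simp
    norm_num
  have cube_ae_eq : (Set.univ.pi fun _ : ι => Set.Icc (-(1 / 2)) (-(1 / 2) + 1 : ℝ)) =ᵐ[volume]
      {x | ∀ i, x i ∈ Set.Ioc (-(1 / 2)) (-(1 / 2) + 1 : ℝ)} := by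
    rw [volume_pi]
    simpa only [Set.pi, Set.mem_univ, true_implies] using
      (Measure.pi_Ioc_ae_eq_pi_Icc (μ := fun _ : ι => volume) (s := Set.univ)
        (f := fun _ => -(1 / 2)) (g := fun _ => (-(1 / 2) + 1 : ℝ))).symm
  calc ∫ x in Set.univ.pi fun _ : ι => Set.Icc (-π) π, g (toTorus x)
      = (2 * π) ^ Fintype.card ι •
          ∫ y in {y : ι → ℝ | ∀ i, y i ∈ Set.Ioc (-(1 / 2)) (-(1 / 2) + 1 : ℝ)},
            g fun i => (y i : UnitAddCircle) := by
        unfold toTorus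
        rw [Measure.setIntegral_comp_smul_of_pos volume
            (fun y : ι → ℝ => g fun i => (y i : UnitAddCircle)) _ (inv_pos.2 htwopi),
          smul_cube, setIntegral_congr_set cube_ae_eq, Module.finrank_fintype_fun_eq_card,
          inv_pow, inv_inv]
    _ = (2 * π) ^ Fintype.card ι • ∫ y : UnitAddTorus ι, g y := by
        rw [UnitAddTorus.integral_preimage g fun _ => -(1 / 2)]

end Fourier

section Aliasing

variable {N : ℕ} [NeZero N]

theorem sum_fourier_toAddCircle (j : ℤ) :
    ∑ s : ZMod N, fourier j (ZMod.toAddCircle s) = if (j : ZMod N) = 0 then (N : ℂ) else 0 := by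
  have fourier_eq_stdAddChar (s : ZMod N) :
      fourier j (ZMod.toAddCircle s) = ZMod.stdAddChar (s * (j : ZMod N)) := by
    rw [fourier_apply, ← map_zsmul, zsmul_eq_mul, mul_comm]
    rfl
  simp_rw [fourier_eq_stdAddChar, AddChar.sum_mulShift _ (ZMod.isPrimitive_stdAddChar N),
    ZMod.card]
  split_ifs <;> simp

theorem sum_mFourier_gridPoint [DecidableEq ι] (k : ι → ℤ) :
    ∑ s : ι → ZMod N, mFourier k (gridPoint s) =
      if ∀ i, (k i : ZMod N) = 0 then (N : ℂ) ^ Fintype.card ι else 0 := by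
  calc ∑ s : ι → ZMod N, mFourier k (gridPoint s)
      = ∏ i, ∑ s : ZMod N, fourier (k i) (ZMod.toAddCircle s) :=
        (Fintype.prod_sum fun i s => fourier (k i) (ZMod.toAddCircle s)).symm
    _ = _ := by
      simp_rw [sum_fourier_toAddCircle, Finset.prod_ite_zero, Finset.mem_univ, true_implies,
        Finset.prod_const, Finset.card_univ]

/-- The discrete Fourier coefficient of `F` at frequency `k`: the normalised trapezoidal sum over
the grid that replaces the integral defining `mFourierCoeff F k`. -/
noncomputable def gridFourierCoeff (N : ℕ) [NeZero N] [DecidableEq ι] (F : UnitAddTorus ι → ℂ)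
    (k : ι → ℤ) : ℂ :=
  ((N : ℂ) ^ Fintype.card ι)⁻¹ * ∑ s : ι → ZMod N, mFourier (-k) (gridPoint s) * F (gridPoint s)

theorem hasSum_ite_mFourierCoeff [DecidableEq ι] {F : C(UnitAddTorus ι, ℂ)}
    (hF : Summable (mFourierCoeff F)) (k : ι → ℤ) :
    HasSum (fun l => if ∀ i, ((l - k) i : ZMod N) = 0 then mFourierCoeff F l else 0)
      (gridFourierCoeff N F k) := by
  have hN : (N : ℂ) ^ Fintype.card ι ≠ 0 := pow_ne_zero _ (Nat.cast_ne_zero.2 (NeZero.ne N))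
  have sampled_series := (hasSum_sum (s := Finset.univ) fun (s : ι → ZMod N) _ =>
    (hasSum_mFourier_series_apply_of_summable hF (gridPoint s)).mul_left
      (mFourier (-k) (gridPoint s))).mul_left (((N : ℂ) ^ Fintype.card ι)⁻¹)
  refine sampled_series.congr_fun fun l => ?_
  have mul_mFourier (s : ι → ZMod N) : mFourier (-k) (gridPoint s) *
      (mFourierCoeff F l • mFourier l (gridPoint s)) =
        mFourierCoeff F l * mFourier (l - k) (gridPoint s) := by
    rw [sub_eq_add_neg, mFourier_add, smul_eq_mul]
    ring
  simp_rw [mul_mFourier, ← Finset.mul_sum, sum_mFourier_gridPoint]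
  split_ifs
  · field_simp
  · simp

theorem hasSum_mFourierCoeff_add_smul [DecidableEq ι] {F : C(UnitAddTorus ι, ℂ)}
    (hF : Summable (mFourierCoeff F)) (k : ι → ℤ) :
    HasSum (fun q : ι → ℤ => mFourierCoeff F (k + (N : ℤ) • q)) (gridFourierCoeff N F k) := by
  have injective_coset : Function.Injective fun q : ι → ℤ => k + (N : ℤ) • q :=
    (add_right_injective k).comp (smul_right_injective _ (Nat.cast_ne_zero.2 (NeZero.ne N)))
  have ite_eq_zero (l : ι → ℤ) (hl : l ∉ Set.range fun q : ι → ℤ => k + (N : ℤ) • q) :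
      (if ∀ i, ((l - k) i : ZMod N) = 0 then mFourierCoeff F l else 0) = 0 := by
    refine if_neg fun hdvd => hl ?_
    simp_rw [ZMod.intCast_zmod_eq_zero_iff_dvd] at hdvd
    choose q hq using hdvd
    refine ⟨q, ?_⟩
    ext i
    simp [← hq i]
  simpa [Function.comp_def] using
    (injective_coset.hasSum_iff ite_eq_zero).2 (hasSum_ite_mFourierCoeff hF k)

theorem mul_norm_le_norm_residueQuotientEquiv (m : ι → ZMod N) (q : ι → ℤ) :
    N * ‖WithLp.toLp 1 q‖ ≤ 2 * ‖WithLp.toLp 1 (residueQuotientEquiv ι N (m, q))‖ := by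
  simp only [norm_toLp_one_eq_sum_abs]
  norm_cast
  simp only [Finset.mul_sum]
  exact Finset.sum_le_sum fun i _ => mul_abs_le_abs_valMinAbs_add_mul (m i) (q i)

theorem div_norm_residueQuotientEquiv_pow_le {a : ℝ} (ha : 0 ≤ a) (r : ℕ) (m : ι → ZMod N)
    {q : ι → ℤ} (hq : q ≠ 0) :
    a / ‖WithLp.toLp 1 (residueQuotientEquiv ι N (m, q))‖ ^ r ≤
      a * (2 / N) ^ r * (‖WithLp.toLp 1 q‖ ^ r)⁻¹ := by
  have hN : (0 : ℝ) < N := Nat.cast_pos.2 (NeZero.pos N)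
  have hq₀ : 0 < ‖WithLp.toLp 1 q‖ := norm_pos_iff.2 (by simpa using hq)
  have norm_ge : N / 2 * ‖WithLp.toLp 1 q‖ ≤
      ‖WithLp.toLp 1 (residueQuotientEquiv ι N (m, q))‖ := by
    linarith [mul_norm_le_norm_residueQuotientEquiv m q]
  calc a / ‖WithLp.toLp 1 (residueQuotientEquiv ι N (m, q))‖ ^ r
      ≤ a / (N / 2 * ‖WithLp.toLp 1 q‖) ^ r := by gcongr
    _ = a * (2 / N) ^ r * (‖WithLp.toLp 1 q‖ ^ r)⁻¹ := by
      rw [mul_pow, div_pow, div_pow]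
      field_simp

theorem tsum_residueClass_norm_sq_le {F : C(UnitAddTorus ι, ℂ)}
    (hF : Summable (mFourierCoeff F)) (hgrid : ∀ s : ι → ZMod N, F (gridPoint s) = 0)
    {a : ℝ} (ha : 0 ≤ a) {r : ℕ} (hr : Fintype.card ι < r)
    (hdecay : ∀ k : ι → ℤ, (∃ i, (N : ℤ) ≤ 2 * |k i|) →
      ‖mFourierCoeff F k‖ ≤ a / ‖WithLp.toLp 1 k‖ ^ r) (m : ι → ZMod N) :
    ∑' q, ‖mFourierCoeff F (residueQuotientEquiv ι N (m, q))‖ ^ 2 ≤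
      2 * (a * (2 / N) ^ r * latticeZeta ι r) ^ 2 := by
  classical
  have coset_sum : HasSum (fun q => mFourierCoeff F (residueQuotientEquiv ι N (m, q))) 0 := by
    have gridFourierCoeff_eq_zero (k : ι → ℤ) : gridFourierCoeff N F k = 0 := by
      simp [gridFourierCoeff, hgrid]
    have aliasing := hasSum_mFourierCoeff_add_smul (N := N) hF fun i => (m i).valMinAbs
    rw [gridFourierCoeff_eq_zero] at aliasing
    exact aliasing
  rw [latticeZeta, ← tsum_mul_left]
  exact tsum_norm_sq_le_of_hasSum_zero (i₀ := 0) coset_sum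
    ((summable_norm_toLp_one_pow_inv hr).mul_left _) (fun q => by positivity) fun q hq =>
      (hdecay _ (exists_le_abs_residueQuotientEquiv m hq)).trans
        (div_norm_residueQuotientEquiv_pow_le ha r m hq)

theorem integral_norm_sq_le_of_gridPoint_eq_zero {F : C(UnitAddTorus ι, ℂ)}
    (hF : Summable (mFourierCoeff F)) (hgrid : ∀ s : ι → ZMod N, F (gridPoint s) = 0)
    {a : ℝ} (ha : 0 ≤ a) {r : ℕ} (hr : Fintype.card ι < r)
    (hdecay : ∀ k : ι → ℤ, (∃ i, (N : ℤ) ≤ 2 * |k i|) →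
      ‖mFourierCoeff F k‖ ≤ a / ‖WithLp.toLp 1 k‖ ^ r) :
    ∫ x : UnitAddTorus ι, ‖F x‖ ^ 2 ≤
      N ^ Fintype.card ι * (2 * (a * (2 / N) ^ r * latticeZeta ι r) ^ 2) := by
  classical
  have parseval := (residueQuotientEquiv ι N).hasSum_iff.2 (hasSum_sq_mFourierCoeff_of_continuous F)
  calc ∫ x : UnitAddTorus ι, ‖F x‖ ^ 2
      = ∑ m : ι → ZMod N, ∑' q, ‖mFourierCoeff F (residueQuotientEquiv ι N (m, q))‖ ^ 2 := by
        rw [← parseval.tsum_eq, parseval.summable.tsum_prod, tsum_fintype]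
        rfl
    _ ≤ ∑ _m : ι → ZMod N, 2 * (a * (2 / N) ^ r * latticeZeta ι r) ^ 2 :=
        Finset.sum_le_sum fun m _ => tsum_residueClass_norm_sq_le hF hgrid ha hr hdecay m
    _ = N ^ Fintype.card ι * (2 * (a * (2 / N) ^ r * latticeZeta ι r) ^ 2) := by
        simp

theorem setIntegral_norm_sq_le_of_hasSum {η : (ι → ℤ) → ℂ} {g : (ι → ℝ) → ℂ}
    (hg : ∀ x, HasSum (fun k => η k * mFourier k (toTorus x)) (g x))
    (hgrid : ∀ s : ι → ZMod N, g (fun i => 2 * π * (s i).val / N) = 0)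
    {a : ℝ} (ha : 0 ≤ a) {r : ℕ} (hr : Fintype.card ι < r)
    (hdecay : ∀ k : ι → ℤ, (∃ i, (N : ℤ) ≤ 2 * |k i|) → ‖η k‖ ≤ a / ‖WithLp.toLp 1 k‖ ^ r) :
    ∫ x in Set.univ.pi fun _ : ι => Set.Icc (-π) π, ‖g x‖ ^ 2 ≤
      (2 * π) ^ Fintype.card ι *
        (N ^ Fintype.card ι * (2 * (a * (2 / N) ^ r * latticeZeta ι r) ^ 2)) := by
  have hη : Summable η := by
    simpa [mFourier_toTorus] using (hg 0).summable
  have hseries : Summable fun k => η k • mFourier k :=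
    .of_norm (by simpa only [norm_smul, mFourier_norm, mul_one] using hη.norm)
  let F : C(UnitAddTorus ι, ℂ) := ∑' k, η k • mFourier k
  have hFη : mFourierCoeff F = η := mFourierCoeff_eq_of_hasSum hseries.hasSum
  have F_toTorus (x : ι → ℝ) : F (toTorus x) = g x :=
    (ContinuousMap.hasSum_apply hseries.hasSum (toTorus x)).unique (hg x)
  calc ∫ x in Set.univ.pi fun _ : ι => Set.Icc (-π) π, ‖g x‖ ^ 2
      = (2 * π) ^ Fintype.card ι * ∫ y : UnitAddTorus ι, ‖F y‖ ^ 2 := by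
        simp_rw [← F_toTorus, setIntegral_comp_toTorus fun y => ‖F y‖ ^ 2, smul_eq_mul]
    _ ≤ _ := by
        gcongr
        refine integral_norm_sq_le_of_gridPoint_eq_zero (hFη ▸ hη) (fun s => ?_) ha hr
          (hFη.symm ▸ hdecay)
        rw [← toTorus_eq_gridPoint, F_toTorus, hgrid]

end Aliasing

theorem pow_mul_sq_eq_div_rpow {d N : ℕ} (hd : d ≠ 0) (hN : N ≠ 0) (r : ℕ) (a Z : ℝ) :
    (N : ℝ) ^ d * (2 * (a * (2 / N) ^ r * Z) ^ 2) =
      2 * (a * 2 ^ r * Z) ^ 2 / ((N ^ d : ℕ) : ℝ) ^ ((2 * (r : ℝ) - d) / d) := by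
  have hN₀ : (0 : ℝ) < N := Nat.cast_pos.2 (Nat.pos_of_ne_zero hN)
  have hd₀ : (d : ℝ) ≠ 0 := Nat.cast_ne_zero.2 hd
  have hpow : ((N ^ d : ℕ) : ℝ) ^ ((2 * (r : ℝ) - d) / d) = (N : ℝ) ^ (2 * r) / N ^ d := by
    rw [Nat.cast_pow, ← rpow_natCast, ← rpow_mul hN₀.le, mul_div_cancel₀ _ hd₀, rpow_sub hN₀,
      rpow_natCast]
    norm_cast
  rw [hpow, div_pow, pow_mul']
  field_simp

theorem hasSum_piecewise_sub {α : Type*} [DecidableEq α] {s : Finset α} {c ζ e : α → ℂ} {z : ℂ}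
    (hζ : HasSum (fun k => ζ k * e k) z) :
    HasSum (fun k => (s.piecewise c 0 - ζ) k * e k) (∑ k ∈ s, c k * e k - z) := by
  have hc : HasSum (fun k => s.piecewise c 0 k * e k) (∑ k ∈ s, s.piecewise c 0 k * e k) :=
    hasSum_sum_of_ne_finset_zero fun k hk => by simp [hk]
  rw [Finset.sum_congr rfl fun k hk => by rw [Finset.piecewise_eq_of_mem s c 0 hk]] at hc
  simpa only [Pi.sub_apply, sub_mul] using hc.sub hζ

end UniformSampling

open UniformSampling in
theorem multivariate_uniform_sampling_error_general {ι : Type*} [Fintype ι] [DecidableEq ι]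
    [Nonempty ι] {a : ℝ} (ha : 0 ≤ a) {r : ℕ} (hr : Fintype.card ι < r) :
    ∃ C : ℝ, 0 < C ∧ ∀ (K : ℕ) (c ζ : (ι → ℤ) → ℂ) (f φ : (ι → ℝ) → ℂ),
      (∀ x : ι → ℝ, f x = ∑ k ∈ Fintype.piFinset (fun _ : ι => Finset.Icc (-(K : ℤ)) K),
        c k * Complex.exp (Complex.I * ∑ i, (k i : ℂ) * (x i : ℂ))) →
      (∀ x : ι → ℝ, HasSum
        (fun k : ι → ℤ => ζ k * Complex.exp (Complex.I * ∑ i, (k i : ℂ) * (x i : ℂ))) (φ x)) →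
      (∀ k : ι → ℤ, (∃ i, (K : ℤ) < |k i|) →
        ‖ζ k‖ ≤ a / ((∑ i, |k i| : ℤ) : ℝ) ^ r) →
      (∀ s : ι → ℕ, (∀ i, s i ≤ 2 * K) →
        f (fun i => 2 * π * s i / (2 * K + 1)) = φ (fun i => 2 * π * s i / (2 * K + 1))) →
      ∫ x in Set.univ.pi (fun _ : ι => Set.Icc (-π) π), ‖f x - φ x‖ ^ 2 ≤
        C / (((2 * K + 1) ^ Fintype.card ι : ℕ) : ℝ) ^
          ((2 * (r : ℝ) - Fintype.card ι) / Fintype.card ι) := by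
  refine ⟨(2 * π) ^ Fintype.card ι * (2 * (a * 2 ^ r * latticeZeta ι r) ^ 2) + 1, by positivity,
    fun K c ζ f φ hf hφ hζ hagree => ?_⟩
  set band := Fintype.piFinset fun _ : ι => Finset.Icc (-(K : ℤ)) K
  have herror (x : ι → ℝ) :
      HasSum (fun k => (band.piecewise c 0 - ζ) k * UnitAddTorus.mFourier k (toTorus x))
        (f x - φ x) := by
    simp_rw [hf, mFourier_toTorus]
    exact hasSum_piecewise_sub (hφ x)
  have hgrid (s : ι → ZMod (2 * K + 1)) : f (fun i => 2 * π * (s i).val / (2 * K + 1 : ℕ)) -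
      φ (fun i => 2 * π * (s i).val / (2 * K + 1 : ℕ)) = 0 := by
    push_cast
    exact sub_eq_zero.2 (hagree _ fun i => Nat.lt_succ_iff.1 (ZMod.val_lt (s i)))
  have hdecay (k : ι → ℤ) (hk : ∃ i, ((2 * K + 1 : ℕ) : ℤ) ≤ 2 * |k i|) :
      ‖(band.piecewise c 0 - ζ) k‖ ≤ a / ‖WithLp.toLp 1 k‖ ^ r := by
    obtain ⟨i, hi⟩ := hk
    have hK : (K : ℤ) < |k i| := by lia
    have hk_band : k ∉ band := fun hmem =>
      hK.not_ge (abs_le.2 (Finset.mem_Icc.1 (Fintype.mem_piFinset.1 hmem i)))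
    simpa [hk_band, norm_toLp_one_eq_sum_abs] using hζ k ⟨i, hK⟩
  refine (setIntegral_norm_sq_le_of_hasSum herror hgrid ha hr hdecay).trans ?_
  rw [pow_mul_sq_eq_div_rpow Fintype.card_ne_zero (NeZero.ne _), ← mul_div_assoc]
  gcongr
  exact le_add_of_nonneg_right zero_le_one

/-- Multivariate uniform-sampling error bound: for every dimension `d ≥ 1` and decay
constant `a > 0` there is `C > 0` such that, whenever a multivariate trigonometric
polynomial `f(x) = ∑_{‖k‖_∞ ≤ K} c_k e^{i k·x}` agrees on the uniform grid of
`n = (2K+1)^d` points with a periodic function `φ` whose Fourier coefficients satisfy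
`|ζ_k| ≤ a/‖k‖₁^{d+1}` for `k ≠ 0`, one has
`‖f - φ‖²_{L²([-π,π]^d)} ≤ C / n^{(d+2)/d}`. -/
theorem multivariate_uniform_sampling_error (d : ℕ) (hd : 1 ≤ d) (a : ℝ) (ha : 0 < a) :
    ∃ C : ℝ, 0 < C ∧ ∀ (K : ℕ) (c ζ : (Fin d → ℤ) → ℂ) (f φ : (Fin d → ℝ) → ℂ),
      (∀ x : Fin d → ℝ, f x = ∑ k ∈ Fintype.piFinset (fun _ : Fin d =>
          Finset.Icc (-(K : ℤ)) (K : ℤ)),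
        c k * Complex.exp (Complex.I * ((∑ i, (k i : ℂ) * (x i : ℂ))))) →
      (∀ x : Fin d → ℝ, HasSum (fun k : Fin d → ℤ =>
          ζ k * Complex.exp (Complex.I * ((∑ i, (k i : ℂ) * (x i : ℂ))))) (φ x)) →
      (∀ k : Fin d → ℤ, k ≠ 0 →
        ‖ζ k‖ ≤ a / ((∑ i, |k i| : ℤ) : ℝ) ^ (d + 1)) →
      (∀ s : Fin d → ℕ, (∀ i, s i ≤ 2 * K) →
        f (fun i => 2 * π * s i / (2 * K + 1)) = φ (fun i => 2 * π * s i / (2 * K + 1))) →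
      ∫ x in Set.univ.pi (fun _ : Fin d => Set.Icc (-π) π), ‖f x - φ x‖ ^ 2 ≤
        C / (((2 * K + 1) ^ d : ℕ) : ℝ) ^ (((d : ℝ) + 2) / (d : ℝ)) := by
  have : NeZero d := ⟨(Nat.zero_lt_of_lt hd).ne'⟩
  have hexponent : 2 * ((d + 1 : ℕ) : ℝ) - d = d + 2 := by
    push_cast
    ring
  obtain ⟨C, hC, hbound⟩ :=
    multivariate_uniform_sampling_error_general (ι := Fin d) (r := d + 1) ha.le (by simp)
  simp only [hexponent, Fintype.card_fin] at hbound
  refine ⟨C, hC, fun K c ζ f φ hf hφ hζ => hbound K c ζ f φ hf hφ fun k ⟨i, hi⟩ => hζ k ?_⟩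
  exact ne_of_apply_ne (fun k => |k i|) (by simpa using (Int.natCast_nonneg K).trans_lt hi)
end

section
/- If a 2π-periodic function φ has Fourier coefficients ζ_k with |ζ_k| ≤ a/k² for all k ≠ 0, and f is a trigonometric polynomial of degree K that agrees with φ at n ≥ 2K+1 equispaced points in [-π,π), then ‖f − φ‖²_{L²[-π,π]} ≤ C a²/n³ for an absolute constant C (independent of K, n, f, φ). -/
open Real

/-!
The error `g = f - φ` vanishes at the sample points, so aliasing forces `∑ⱼ ± d (k + j n) = 0` along
every residue class of frequencies modulo `n`, where `d` are the Fourier coefficients of `g`. In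
each class at most one frequency has size below `n / 2`; at all others `d` equals `-ζ` and is
`O(a / (n j)²)`. The remaining coefficient is minus the signed sum of those, so the whole class has
`ℓ¹` norm, hence also `ℓ²` norm, `O(a / n²)`. Parseval sums the squares over the `n` classes.
-/

section Series

variable {ι E : Type*}

lemma tsum_sq_le_sq_tsum {u : ι → ℝ} (hu : Summable u) (hu₀ : 0 ≤ u) :
    ∑' i, u i ^ 2 ≤ (∑' i, u i) ^ 2 :=
  Real.tsum_le_of_sum_le (fun _ ↦ sq_nonneg _) fun s ↦
    calc ∑ i ∈ s, u i ^ 2 ≤ (∑ i ∈ s, u i) ^ 2 :=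
          Finset.sum_sq_le_sq_sum_of_nonneg fun i _ ↦ hu₀ i
      _ ≤ (∑' i, u i) ^ 2 := by
          have := Finset.sum_nonneg fun i (_ : i ∈ s) ↦ hu₀ i
          gcongr
          exact hu.sum_le_tsum s fun i _ ↦ hu₀ i

lemma norm_le_of_hasSum_zero [NormedAddCommGroup E] {u : ι → E} {v : ι → ℝ} {s : ℝ} {i : ι}
    (hu : HasSum u 0) (hv : HasSum v s) (hvi : 0 ≤ v i) (huv : ∀ j ≠ i, ‖u j‖ ≤ v j) :
    ‖u i‖ ≤ s := by
  classical
  have hrest : HasSum (Function.update u i 0) (-u i) := by simpa using hu.update i 0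
  rw [← norm_neg]
  refine hrest.norm_le_of_bounded hv fun j ↦ ?_
  rcases eq_or_ne j i with rfl | hj
  · simpa using hvi
  · simpa [hj] using huv j hj

lemma tsum_norm_le_two_mul_of_hasSum_zero [NormedAddCommGroup E] {u : ι → E} {v : ι → ℝ} {s : ℝ}
    {i : ι} (hu : HasSum u 0) (hv : HasSum v s) (hvi : 0 ≤ v i) (huv : ∀ j ≠ i, ‖u j‖ ≤ v j) :
    ∑' j, ‖u j‖ ≤ 2 * s := by
  classical
  have hmajorant : HasSum (fun j ↦ v j + if j = i then s else 0) (2 * s) := by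
    rw [two_mul]
    exact hv.add (hasSum_ite_eq i s)
  have hle : ∀ j, ‖u j‖ ≤ v j + if j = i then s else 0 := fun j ↦ by
    rcases eq_or_ne j i with rfl | hj
    · simpa using (norm_le_of_hasSum_zero hu hv hvi huv).trans (le_add_of_nonneg_left hvi)
    · simpa [hj] using huv j hj
  exact (hmajorant.summable.of_nonneg_of_le (fun _ ↦ norm_nonneg _) hle).tsum_le_of_sum_le
    fun t ↦ (Finset.sum_le_sum fun j _ ↦ hle j).trans <|
      sum_le_hasSum t (fun j _ ↦ (norm_nonneg _).trans (hle j)) hmajorant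

lemma tsum_eq_sum_fin_tsum_add_mul [NormedAddCommGroup E] [CompleteSpace E] {f : ℤ → E}
    (hf : Summable f) (n : ℕ) [NeZero n] (k₀ : ℤ) :
    ∑' m, f m = ∑ r : Fin n, ∑' j : ℤ, f (k₀ + r + j * n) := by
  let e : Fin n × ℤ ≃ ℤ :=
    ((Equiv.prodComm _ _).trans (Int.divModEquiv n).symm).trans (Equiv.addLeft k₀)
  have he (r : Fin n) (j : ℤ) : e (r, j) = k₀ + r + j * n := by
    simp only [e, Equiv.trans_apply, Equiv.prodComm_apply, Prod.swap_prod_mk,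
      Int.divModEquiv_symm_apply, Equiv.coe_addLeft]
    ring
  have hfe : Summable fun q ↦ f (e q) := e.summable_iff.2 hf
  rw [← e.tsum_eq f, hfe.tsum_prod, tsum_fintype]
  simp only [he]

lemma summable_one_div_abs_int_rpow {p : ℝ} (hp : 1 < p) :
    Summable fun j : ℤ ↦ 1 / |(j : ℝ)| ^ p := by
  simpa only [one_div, rpow_neg (abs_nonneg _)] using summable_abs_int_rpow hp

end Series

section Fourier

variable {T : ℝ}

lemma norm_fourier_apply (k : ℤ) (x : AddCircle T) : ‖fourier k x‖ = 1 :=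
  Circle.norm_coe _

lemma fourier_coe_eq_exp (k : ℤ) (x : ℝ) :
    fourier k (x : AddCircle (2 * π)) = Complex.exp (Complex.I * k * x) := by
  rw [fourier_coe_apply]
  congr 1
  push_cast
  field_simp

lemma fourierCoeff_eq_of_hasSum [Fact (0 < T)] {d : ℤ → ℂ} {F : C(AddCircle T, ℂ)}
    (hF : HasSum (fun k ↦ d k • fourier k) F) : fourierCoeff F = d := by
  ext k
  rw [← fourierCoeff_toLp, ← fourierBasis_repr, fourierBasis.repr_apply_apply, coe_fourierBasis]
  have hL2 := (ContinuousMap.toLp 2 AddCircle.haarAddCircle ℂ).hasSum hF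
  have hinner (j : ℤ) : inner ℂ (fourierLp (T := T) 2 k) (fourierLp 2 j) = if k = j then 1 else 0 :=
    orthonormal_iff_ite.1 orthonormal_fourier k j
  have hcoeff (j : ℤ) : innerSL ℂ (fourierLp (T := T) 2 k)
      (ContinuousMap.toLp 2 AddCircle.haarAddCircle ℂ (d j • fourier j)) =
        if j = k then d k else 0 := by
    rw [map_smul, innerSL_apply_apply, inner_smul_right, hinner]
    grind
  refine ((innerSL ℂ (fourierLp 2 k)).hasSum hL2).unique ?_
  simpa only [hcoeff] using hasSum_ite_eq k (d k)

lemma hasSum_sq_norm_of_hasSum_fourier [Fact (0 < T)] {d : ℤ → ℂ} {F : C(AddCircle T, ℂ)}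
    (hF : HasSum (fun k ↦ d k • fourier k) F) :
    HasSum (fun k ↦ ‖d k‖ ^ 2) (T⁻¹ * ∫ t, ‖F t‖ ^ 2) := by
  rw [← smul_eq_mul, ← AddCircle.integral_haarAddCircle]
  convert hasSum_sq_fourierCoeff (ContinuousMap.toLp 2 AddCircle.haarAddCircle ℂ F) using 1
  · simp only [fourierCoeff_toLp, fourierCoeff_eq_of_hasSum hF]
  · refine MeasureTheory.integral_congr_ae ?_
    filter_upwards [ContinuousMap.coeFn_toLp (p := 2) (𝕜 := ℂ) AddCircle.haarAddCircle F] with t ht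
    rw [ht]

lemma sum_fourier_equispaced (hT : T ≠ 0) {n : ℕ} (hn : n ≠ 0) (m : ℤ) (x₀ : ℝ) :
    ∑ i ∈ Finset.range n, fourier m ((x₀ + T * i / n : ℝ) : AddCircle T) =
      if (n : ℤ) ∣ m then n * fourier m (x₀ : AddCircle T) else 0 := by
  set ω : ℂ := Complex.exp (2 * π * Complex.I / n) with hω
  have hprim : IsPrimitiveRoot ω n := Complex.isPrimitiveRoot_exp n hn
  have hsample (i : ℕ) : fourier m ((x₀ + T * i / n : ℝ) : AddCircle T) =
      fourier m (x₀ : AddCircle T) * (ω ^ m) ^ i := by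
    have : (T : ℂ) ≠ 0 := by exact_mod_cast hT
    rw [fourier_coe_apply, fourier_coe_apply, hω, ← Complex.exp_int_mul, ← Complex.exp_nat_mul,
      ← Complex.exp_add]
    congr 1
    push_cast
    field_simp
  simp only [hsample, ← Finset.mul_sum]
  split_ifs with hm
  · simp [(hprim.zpow_eq_one_iff_dvd m).2 hm, mul_comm]
  · have hpow : (ω ^ m) ^ n = 1 := by
      rw [← zpow_natCast, zpow_comm, zpow_natCast, hprim.pow_eq_one, one_zpow]
    rw [geom_sum_eq (mt (hprim.zpow_eq_one_iff_dvd m).1 hm), hpow, sub_self, zero_div, mul_zero]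

end Fourier

/-- `HasFourierSeries T d g`: the trigonometric series of period `T` with coefficients `d` converges
to `g` at every point of `ℝ`. Convergence is unconditional, so it forces `d` to be absolutely
summable; for `0 < T` this makes `d` the sequence of Fourier coefficients of `g`. -/
def HasFourierSeries (T : ℝ) (d : ℤ → ℂ) (g : ℝ → ℂ) : Prop :=
  ∀ x : ℝ, HasSum (fun k ↦ d k * fourier k (x : AddCircle T)) (g x)

namespace HasFourierSeries

variable {T : ℝ} {c d : ℤ → ℂ} {f g : ℝ → ℂ}

lemma of_exp (h : ∀ x : ℝ, HasSum (fun k : ℤ ↦ d k * Complex.exp (Complex.I * k * x)) (g x)) :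
    HasFourierSeries (2 * π) d g :=
  fun x ↦ by simpa only [fourier_coe_eq_exp] using h x

lemma of_finset_sum {s : Finset ℤ} (h : ∀ x : ℝ, f x = ∑ k ∈ s, c k * fourier k (x : AddCircle T)) :
    HasFourierSeries T (fun k ↦ if k ∈ s then c k else 0) f := fun x ↦ by
  have hterm : ∀ k ∈ s, c k * fourier k (x : AddCircle T) =
      (if k ∈ s then c k else 0) * fourier k (x : AddCircle T) := fun k hk ↦ by rw [if_pos hk]
  rw [h x, Finset.sum_congr rfl hterm]
  exact hasSum_sum_of_ne_finset_zero fun k hk ↦ by simp only [if_neg hk, zero_mul]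

lemma sub (hf : HasFourierSeries T c f) (hg : HasFourierSeries T d g) :
    HasFourierSeries T (c - d) (f - g) := fun x ↦ by
  simpa only [Pi.sub_apply, sub_mul] using (hf x).sub (hg x)

lemma summable_norm (hg : HasFourierSeries T d g) : Summable fun k ↦ ‖d k‖ := by
  simpa only [norm_mul, norm_fourier_apply, mul_one] using (hg 0).summable.norm

lemma hasSum_sq_norm [Fact (0 < T)] (hg : HasFourierSeries T d g) (t : ℝ) :
    HasSum (fun k ↦ ‖d k‖ ^ 2) (T⁻¹ * ∫ x in t..t + T, ‖g x‖ ^ 2) := by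
  have hsum : Summable fun k ↦ d k • (fourier k : C(AddCircle T, ℂ)) := .of_norm <| by
    simpa only [norm_smul, fourier_norm, mul_one] using hg.summable_norm
  obtain ⟨F, hF⟩ := hsum
  have hgF (x : ℝ) : g x = F x :=
    (hg x).unique <| (ContinuousMap.evalCLM ℂ (x : AddCircle T)).hasSum hF
  simp only [hgF, AddCircle.intervalIntegral_preimage T t fun z ↦ ‖F z‖ ^ 2]
  exact hasSum_sq_norm_of_hasSum_fourier hF

lemma hasSum_aliasing (hg : HasFourierSeries T d g) (hT : T ≠ 0) {n : ℕ} (hn : n ≠ 0) (k : ℤ)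
    (x₀ : ℝ) :
    HasSum (fun j : ℤ ↦ d (k + j * n) * (n * fourier (j * n) (x₀ : AddCircle T)))
      (∑ i ∈ Finset.range n, g (x₀ + T * i / n) *
        fourier (-k) ((x₀ + T * i / n : ℝ) : AddCircle T)) := by
  have hsampled : HasSum (fun m ↦ d m * if (n : ℤ) ∣ m - k then
      n * fourier (m - k) (x₀ : AddCircle T) else 0)
      (∑ i ∈ Finset.range n, g (x₀ + T * i / n) *
        fourier (-k) ((x₀ + T * i / n : ℝ) : AddCircle T)) := by
    have h := hasSum_sum fun i (_ : i ∈ Finset.range n) ↦ (hg (x₀ + T * i / n)).mul_right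
      (fourier (-k) ((x₀ + T * i / n : ℝ) : AddCircle T))
    simpa only [mul_assoc, ← fourier_add, ← sub_eq_add_neg, ← Finset.mul_sum,
      sum_fourier_equispaced hT hn] using h
  have hinj : Function.Injective fun j : ℤ ↦ k + j * n :=
    (add_right_injective k).comp (mul_left_injective₀ (by exact_mod_cast hn))
  rw [← hinj.hasSum_iff] at hsampled
  · simpa [-fourier_apply, Function.comp_def] using hsampled
  · intro m hm
    rw [if_neg, mul_zero]
    rintro ⟨j, hj⟩
    exact hm ⟨j, by linarith⟩

lemma hasSum_residue_eq_zero (hg : HasFourierSeries T d g) (hT : T ≠ 0) {n : ℕ} (hn : n ≠ 0)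
    {x₀ : ℝ} (h₀ : ∀ i ∈ Finset.range n, g (x₀ + T * i / n) = 0) (k : ℤ) :
    HasSum (fun j : ℤ ↦ d (k + j * n) * fourier (j * n) (x₀ : AddCircle T)) 0 := by
  have h := hg.hasSum_aliasing hT hn k x₀
  rw [Finset.sum_eq_zero fun i hi ↦ by rw [h₀ i hi, zero_mul]] at h
  have hn' : (n : ℂ) ≠ 0 := by exact_mod_cast hn
  rw [← hasSum_mul_left_iff hn', mul_zero]
  simpa only [mul_left_comm (n : ℂ)] using h

end HasFourierSeries

section Decay

variable {d : ℤ → ℂ} {a p : ℝ} {n : ℕ} {k : ℤ}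

lemma abs_mul_le_two_mul_abs_add_mul (hk : 2 * |k| ≤ n) {j : ℤ} (hj : j ≠ 0) :
    |j| * n ≤ 2 * |k + j * n| := by
  have hj₁ : 1 ≤ |j| := Int.one_le_abs hj
  have htri : |j| * n ≤ |k + j * n| + |k| := by
    simpa [abs_mul] using abs_sub (k + j * n) k
  nlinarith

lemma norm_add_mul_le_of_decay (hp : 0 ≤ p) (hn : n ≠ 0)
    (hd : ∀ m : ℤ, (n : ℤ) ≤ 2 * |m| → ‖d m‖ ≤ a / |(m : ℝ)| ^ p) (hk : 2 * |k| ≤ n) {j : ℤ}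
    (hj : j ≠ 0) : ‖d (k + j * n)‖ ≤ a / (n / 2) ^ p * (1 / |(j : ℝ)| ^ p) := by
  have hfar := abs_mul_le_two_mul_abs_add_mul hk hj
  have hj₁ : 1 ≤ |j| := Int.one_le_abs hj
  have hdec := hd (k + j * n) (by nlinarith)
  have hfar' : |(j : ℝ)| * (n / 2) ≤ |((k + j * n : ℤ) : ℝ)| := by
    have : |(j : ℝ)| * n ≤ 2 * |((k + j * n : ℤ) : ℝ)| := by exact_mod_cast hfar
    linarith
  have ha : 0 ≤ a := by
    have hpos : 0 < |((k + j * n : ℤ) : ℝ)| ^ p :=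
      rpow_pos_of_pos (lt_of_lt_of_le (by positivity) hfar') p
    simpa using (le_div_iff₀ hpos).1 ((norm_nonneg _).trans hdec)
  calc ‖d (k + j * n)‖ ≤ a / |((k + j * n : ℤ) : ℝ)| ^ p := hdec
    _ ≤ a / (|(j : ℝ)| * (n / 2)) ^ p := by gcongr
    _ = a / (n / 2) ^ p * (1 / |(j : ℝ)| ^ p) := by
      rw [mul_rpow (by positivity) (by positivity), div_mul_div_comm, mul_one, mul_comm (_ ^ p)]

end Decay

namespace HasFourierSeries

variable {T : ℝ} {d : ℤ → ℂ} {g : ℝ → ℂ} {a p x₀ : ℝ} {n : ℕ}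

lemma tsum_sq_norm_residue_le (hg : HasFourierSeries T d g) (hT : T ≠ 0) (hn : n ≠ 0) (hp : 1 < p)
    (h₀ : ∀ i ∈ Finset.range n, g (x₀ + T * i / n) = 0)
    (hd : ∀ m : ℤ, (n : ℤ) ≤ 2 * |m| → ‖d m‖ ≤ a / |(m : ℝ)| ^ p) {k : ℤ} (hk : 2 * |k| ≤ n) :
    ∑' j : ℤ, ‖d (k + j * n)‖ ^ 2 ≤ (2 * (a / (n / 2) ^ p * ∑' j : ℤ, 1 / |(j : ℝ)| ^ p)) ^ 2 := by
  have hmajorant := (summable_one_div_abs_int_rpow hp).hasSum.mul_left (a / (n / 2 : ℝ) ^ p)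
  have hzero := hg.hasSum_residue_eq_zero hT hn h₀ k
  have hnorm (j : ℤ) : ‖d (k + j * n) * fourier (j * n) (x₀ : AddCircle T)‖ = ‖d (k + j * n)‖ := by
    rw [norm_mul, norm_fourier_apply, mul_one]
  have hsum : Summable fun j : ℤ ↦ ‖d (k + j * n)‖ := by
    simpa only [hnorm] using hzero.summable.norm
  have hl1 : ∑' j : ℤ, ‖d (k + j * n)‖ ≤ 2 * (a / (n / 2) ^ p * ∑' j : ℤ, 1 / |(j : ℝ)| ^ p) := by
    simp only [← hnorm]
    refine tsum_norm_le_two_mul_of_hasSum_zero (i := 0) hzero hmajorant ?_ fun j hj ↦ ?_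
    · -- The majorant vanishes at `j = 0`, where `1 / |j| ^ p = 1 / 0 = 0`.
      simp [zero_rpow (by linarith : p ≠ 0)]
    · rw [hnorm]
      exact norm_add_mul_le_of_decay (by linarith) hn hd hk hj
  calc ∑' j : ℤ, ‖d (k + j * n)‖ ^ 2 ≤ (∑' j : ℤ, ‖d (k + j * n)‖) ^ 2 :=
        tsum_sq_le_sq_tsum hsum fun _ ↦ norm_nonneg _
    _ ≤ _ := pow_le_pow_left₀ (tsum_nonneg fun _ ↦ norm_nonneg _) hl1 2

theorem integral_sq_norm_le_of_samples_eq_zero [Fact (0 < T)] (hg : HasFourierSeries T d g)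
    (hn : n ≠ 0) (hp : 1 < p) (h₀ : ∀ i ∈ Finset.range n, g (x₀ + T * i / n) = 0)
    (hd : ∀ m : ℤ, (n : ℤ) ≤ 2 * |m| → ‖d m‖ ≤ a / |(m : ℝ)| ^ p) (t : ℝ) :
    ∫ x in t..t + T, ‖g x‖ ^ 2 ≤
      T * (2 ^ (p + 1) * ∑' j : ℤ, 1 / |(j : ℝ)| ^ p) ^ 2 * a ^ 2 / n ^ (2 * p - 1) := by
  have hT : 0 < T := Fact.out
  have : NeZero n := ⟨hn⟩
  have hn₀ : (0 : ℝ) < n := by positivity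
  have hparseval := hg.hasSum_sq_norm t
  set S : ℝ := ∑' j : ℤ, 1 / |(j : ℝ)| ^ p
  calc ∫ x in t..t + T, ‖g x‖ ^ 2 = T * ∑' m, ‖d m‖ ^ 2 := by
        rw [hparseval.tsum_eq, mul_inv_cancel_left₀ hT.ne']
    _ = T * ∑ r : Fin n, ∑' j : ℤ, ‖d (-(n / 2 : ℤ) + r + j * n)‖ ^ 2 := by
        rw [tsum_eq_sum_fin_tsum_add_mul hparseval.summable n]
    _ ≤ T * ∑ _r : Fin n, (2 * (a / (n / 2) ^ p * S)) ^ 2 := by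
        gcongr with r
        exact hg.tsum_sq_norm_residue_le hT.ne' hn hp h₀ hd (by grind)
    _ = T * (2 ^ (p + 1) * S) ^ 2 * a ^ 2 / n ^ (2 * p - 1) := by
        rw [Finset.sum_const, Finset.card_univ, Fintype.card_fin, nsmul_eq_mul,
          div_rpow hn₀.le zero_le_two, rpow_add_one two_ne_zero, rpow_sub_one hn₀.ne', two_mul p,
          rpow_add hn₀]
        field_simp

end HasFourierSeries

theorem univariate_uniform_sampling_error_general {p : ℝ} (hp : 1 < p) :
    ∃ C : ℝ, 0 < C ∧ ∀ (a x₀ : ℝ) (K n : ℕ) (c ζ : ℤ → ℂ) (f φ : ℝ → ℂ),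
      2 * K + 1 ≤ n →
      (∀ x : ℝ, HasSum (fun k : ℤ => ζ k * Complex.exp (Complex.I * (k : ℂ) * (x : ℂ))) (φ x)) →
      (∀ k : ℤ, (n : ℤ) ≤ 2 * |k| → ‖ζ k‖ ≤ a / |(k : ℝ)| ^ p) →
      (∀ x : ℝ, f x = ∑ k ∈ Finset.Icc (-(K : ℤ)) (K : ℤ),
        c k * Complex.exp (Complex.I * (k : ℂ) * (x : ℂ))) →
      (∀ i ∈ Finset.range n, f (x₀ + 2 * π * i / n) = φ (x₀ + 2 * π * i / n)) →
      ∫ x in (-π)..π, ‖f x - φ x‖ ^ 2 ≤ C * a ^ 2 / (n : ℝ) ^ (2 * p - 1) := by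
  have : Fact (0 < 2 * π) := ⟨two_pi_pos⟩
  have hS : 0 < ∑' j : ℤ, 1 / |(j : ℝ)| ^ p :=
    (summable_one_div_abs_int_rpow hp).tsum_pos (fun _ ↦ by positivity) 1 (by simp)
  refine ⟨2 * π * (2 ^ (p + 1) * ∑' j : ℤ, 1 / |(j : ℝ)| ^ p) ^ 2, by positivity, ?_⟩
  intro a x₀ K n c ζ f φ hKn hφ hζ hf hs
  simp only [← fourier_coe_eq_exp] at hf
  have herr := (HasFourierSeries.of_finset_sum hf).sub (.of_exp hφ)
  have hdecay : ∀ k : ℤ, (n : ℤ) ≤ 2 * |k| →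
      ‖(if k ∈ Finset.Icc (-(K : ℤ)) K then c k else 0) - ζ k‖ ≤ a / |(k : ℝ)| ^ p := fun k hk ↦ by
    rw [if_neg (by grind), zero_sub, norm_neg]
    exact hζ k hk
  have hzero : ∀ i ∈ Finset.range n, (f - φ) (x₀ + 2 * π * i / n) = 0 := fun i hi ↦
    sub_eq_zero.2 (hs i hi)
  simpa [neg_add_eq_sub, two_mul] using
    herr.integral_sq_norm_le_of_samples_eq_zero (by omega) hp hzero hdecay (-π)

/-- Univariate uniform-sampling error theorem: there is an absolute constant `C` such that
if a `2π`-periodic function `φ` has Fourier coefficients `ζ_k` with `|ζ_k| ≤ a/k²` for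
`k ≠ 0`, and a trigonometric polynomial `f` of degree `K` agrees with `φ` at the
`n ≥ 2K+1` equispaced points `x_i = -π + 2πi/n`, then
`‖f − φ‖²_{L²[-π,π]} ≤ C a²/n³`. -/
theorem univariate_uniform_sampling_error :
    ∃ C : ℝ, 0 < C ∧ ∀ (a : ℝ) (K n : ℕ) (c ζ : ℤ → ℂ) (f φ : ℝ → ℂ),
      2 * K + 1 ≤ n →
      (∀ x : ℝ, φ (x + 2 * π) = φ x) →
      (∀ x : ℝ, HasSum (fun k : ℤ => ζ k * Complex.exp (Complex.I * (k : ℂ) * (x : ℂ))) (φ x)) →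
      (∀ k : ℤ, k ≠ 0 → ‖ζ k‖ ≤ a / ((k : ℝ) ^ 2)) →
      (∀ x : ℝ, f x = ∑ k ∈ Finset.Icc (-(K : ℤ)) (K : ℤ),
        c k * Complex.exp (Complex.I * (k : ℂ) * (x : ℂ))) →
      (∀ i ∈ Finset.range n, f (-π + 2 * π * i / n) = φ (-π + 2 * π * i / n)) →
      ∫ x in (-π)..π, ‖f x - φ x‖ ^ 2 ≤ C * a ^ 2 / (n : ℝ) ^ 3 := by
  obtain ⟨C, hC, hbound⟩ := univariate_uniform_sampling_error_general one_lt_two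
  exact ⟨C, hC, fun a K n c ζ f φ hKn _ hφ hζ hf hs ↦ by
    simpa [show (2 * 2 - 1 : ℝ) = 3 by norm_num] using
      hbound a (-π) K n c ζ f φ hKn hφ (fun k hk ↦ by simpa using hζ k (by grind)) hf hs⟩
end
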